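/- arXiv:1911.13294 — 8 statements merged into one kernel-verified Lean document; each statement's English description precedes it below -/
import Mathlib

section
/- Let d, δ ≥ 2 be integers. Every finite tree with a proper white/black 2-coloring of its vertices admits a set X of edges such that every white vertex of degree exactly d is incident to exactly one edge of X and every black vertex of degree exactly δ is incident to exactly δ−1 edges of X. -/
/-- The number of edges of `X` incident to `v` (edges of the graph `G`). -/
def degIn {V : Type*} [Fintype V] [DecidableEq V] (G : SimpleGraph V) [DecidableRel G.Adj]
    (X : Finset (Sym2 V)) (v : V) : ℕ :=
  ((G.neighborFinset v).filter (fun u => s(v, u) ∈ X)).card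

theorem parent_exists {V : Type*} (G : SimpleGraph V) (hT : G.IsTree) (r v : V) (hv : v ≠ r) :
    ∃ p, G.Adj v p ∧ G.dist p r + 1 = G.dist v r ∧
      ∀ u, G.Adj v u → G.dist u r + 1 = G.dist v r → u = p := by
  obtain ⟨w, hw, hl⟩ := hT.connected.exists_path_of_dist v r
  cases w with
  | nil => exact absurd rfl hv
  | @cons _ p _ h q =>
    have h1 := SimpleGraph.dist_le q
    have h2 := hT.dist_eq_dist_add_one_of_adj r h
    rw [SimpleGraph.dist_comm (u := r) (v := v), SimpleGraph.dist_comm (u := r) (v := p)] at h2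
    simp only [SimpleGraph.Walk.length_cons] at hl
    refine ⟨p, h, by omega, ?_⟩
    intro u hu hd
    obtain ⟨q', hq', hl'⟩ := hT.connected.exists_path_of_dist u r
    have hp : (SimpleGraph.Walk.cons hu q').IsPath := by
      apply SimpleGraph.Walk.isPath_of_length_eq_dist
      simp only [SimpleGraph.Walk.length_cons]
      omega
    have := (hT.existsUnique_path v r).unique hp hw
    have := congrArg SimpleGraph.Walk.snd this
    simpa using this

/-- For `d, δ ≥ 2`, every finite tree with a proper white/black 2-coloring admits
a set `X` of edges such that every white vertex of degree exactly `d` is incident to exactly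
one edge of `X`, and every black vertex of degree exactly `δ` is incident to exactly `δ - 1`
edges of `X`. -/
theorem stmt_4 {V : Type*} [Fintype V] [DecidableEq V]
    (G : SimpleGraph V) [DecidableRel G.Adj] (hT : G.IsTree)
    (d δ : ℕ) (hd : 2 ≤ d) (hδ : 2 ≤ δ)
    (color : V → Bool)
    (hproper : ∀ ⦃u v : V⦄, G.Adj u v → color u ≠ color v) :
    ∃ X : Finset (Sym2 V), ↑X ⊆ G.edgeSet ∧
      (∀ w : V, color w = true → G.degree w = d → degIn G X w = 1) ∧
      (∀ w : V, color w = false → G.degree w = δ → degIn G X w = δ - 1) := by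
  classical
  obtain ⟨r, hr⟩ : ∃ r, G.degree r ≤ 1 := by
    rcases subsingleton_or_nontrivial V with h | h
    · obtain ⟨r⟩ := hT.connected.nonempty
      refine ⟨r, ?_⟩
      have := G.degree_lt_card_verts r
      have := Fintype.card_le_one_iff_subsingleton.2 h
      omega
    · obtain ⟨r, hr⟩ := hT.exists_vert_degree_one_of_nontrivial
      exact ⟨r, hr.le⟩
  let X : Finset (Sym2 V) := G.edgeFinset.filter
    (fun e => ∃ a b, e = s(a, b) ∧ color a = true ∧ G.dist b r + 1 = G.dist a r)
  have hX : ∀ v u, G.Adj v u → (s(v, u) ∈ X ↔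
      (color v = true ∧ G.dist u r + 1 = G.dist v r) ∨
      (color u = true ∧ G.dist v r + 1 = G.dist u r)) := by
    intro v u h
    simp only [X, Finset.mem_filter, SimpleGraph.mem_edgeFinset, SimpleGraph.mem_edgeSet, h,
      true_and, Sym2.eq_iff]
    constructor
    · rintro ⟨a, b, ⟨rfl, rfl⟩ | ⟨rfl, rfl⟩, h1, h2⟩
      · exact Or.inl ⟨h1, h2⟩
      · exact Or.inr ⟨h1, h2⟩
    · rintro (⟨h1, h2⟩ | ⟨h1, h2⟩)
      · exact ⟨v, u, Or.inl ⟨rfl, rfl⟩, h1, h2⟩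
      · exact ⟨u, v, Or.inr ⟨rfl, rfl⟩, h1, h2⟩
  refine ⟨X, ?_, ?_, ?_⟩
  · intro e he
    exact SimpleGraph.mem_edgeFinset.1 (Finset.mem_filter.1 he).1
  · intro w hc hdeg
    obtain ⟨p, hp, hpd, hu⟩ := parent_exists G hT r w (by rintro rfl; omega)
    unfold degIn
    rw [Finset.card_eq_one]
    refine ⟨p, ?_⟩
    ext u
    simp only [Finset.mem_filter, SimpleGraph.mem_neighborFinset, Finset.mem_singleton]
    constructor
    · rintro ⟨ha, hx⟩
      rcases (hX _ _ ha).1 hx with ⟨_, h⟩ | ⟨h, _⟩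
      · exact hu u ha h
      · exact absurd (hc.trans h.symm) (hproper ha)
    · rintro rfl
      exact ⟨hp, (hX _ _ hp).2 (Or.inl ⟨hc, hpd⟩)⟩
  · intro w hc hdeg
    obtain ⟨p, hp, hpd, hu⟩ := parent_exists G hT r w (by rintro rfl; omega)
    unfold degIn
    have : (G.neighborFinset w).filter (fun u => s(w, u) ∈ X) = (G.neighborFinset w).erase p := by
      ext u
      simp only [Finset.mem_filter, SimpleGraph.mem_neighborFinset, Finset.mem_erase]
      rw [and_comm]
      refine and_congr_left fun ha => ?_
      rw [hX _ _ ha]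
      have hcu : color u = true := by
        have := hproper ha
        rw [hc] at this
        cases h : color u
        · exact absurd h.symm this
        · rfl
      have h2 := hT.dist_eq_dist_add_one_of_adj r ha
      rw [SimpleGraph.dist_comm (u := r) (v := w), SimpleGraph.dist_comm (u := r) (v := u)] at h2
      constructor
      · rintro (⟨h, _⟩ | ⟨_, h⟩) rfl
        · simp [hc] at h
        · omega
      · intro hne
        refine Or.inr ⟨hcu, ?_⟩
        rcases h2 with h2 | h2
        · exact absurd (hu u ha h2.symm) hne
        · exact h2.symm
    rw [this, Finset.card_erase_of_mem (by simpa using hp), SimpleGraph.card_neighborFinset_eq_degree,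
      hdeg]
end

section
/- Let c ≥ 1 be an integer and let F be a finite forest on n ≥ 1 vertices. Let ℓ be the number of vertices of F of degree at most 1, and let p be the number of vertices v of degree exactly 2 for which there exists a set of at least c vertices of F, all of degree exactly 2 and containing v, that induces a connected subgraph of F. Then ℓ + p ≥ n/(2c). -/
open Finset in
theorem forest_sum {V : Type*} [Fintype V] (G : SimpleGraph V) [DecidableRel G.Adj]
    [Fintype G.ConnectedComponent]
    (hG : G.IsAcyclic) :
    ∑ v, G.degree v + 2 * Fintype.card G.ConnectedComponent = 2 * Fintype.card V := by
  classical
  have h1 : ∀ C : G.ConnectedComponent,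
      ∑ v with G.connectedComponentMk v = C, G.degree v + 2
        = 2 * #{v | G.connectedComponentMk v = C} := by
    intro C
    have ht : (G.induce C.supp).IsTree := hG.isTree_connectedComponent C
    have h2 := ht.card_edgeFinset
    have h3 := (G.induce C.supp).sum_degrees_eq_twice_card_edges
    have h4 : ∑ v with G.connectedComponentMk v = C, G.degree v
        = ∑ v : C.supp, (G.induce C.supp).degree v := by
      rw [Finset.sum_subtype (p := (· ∈ C.supp)) _ (by simp)]
      refine Finset.sum_congr rfl fun v _ => ?_
      rw [SimpleGraph.degree_induce_of_neighborSet_subset]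
      intro w hw
      have hv := v.2
      rw [SimpleGraph.ConnectedComponent.mem_supp_iff] at hv ⊢
      rw [← hv]
      exact (SimpleGraph.ConnectedComponent.connectedComponentMk_eq_of_adj hw).symm
    have h5 : #{v | G.connectedComponentMk v = C} = Fintype.card C.supp := by
      rw [Fintype.card_subtype]; simp
    omega
  have h6 := Finset.sum_congr (rfl : (univ : Finset G.ConnectedComponent) = univ) (fun C _ => h1 C)
  have e1 : ∑ C, ∑ v with G.connectedComponentMk v = C, G.degree v = ∑ v, G.degree v := by
    convert Finset.sum_fiberwise (univ : Finset V) G.connectedComponentMk (fun v => G.degree v)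
  have e2 : ∑ C, #{v | G.connectedComponentMk v = C} = Fintype.card V := by
    rw [← card_univ]
    convert (Finset.card_eq_sum_card_fiberwise (s := (univ : Finset V))
      (f := G.connectedComponentMk) (t := univ) (fun _ _ => by simp)).symm
  rw [Finset.sum_add_distrib, e1, ← Finset.mul_sum, e2] at h6
  simp only [sum_const, card_univ, smul_eq_mul] at h6
  omega

open Finset in
theorem few_leaves {V : Type*} [Fintype V] [DecidableEq V]
    (F : SimpleGraph V) [DecidableRel F.Adj] (hF : F.IsAcyclic) :
    #{v | 3 ≤ F.degree v} ≤ #{v | F.degree v ≤ 1} := by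
  classical
  have h := forest_sum F hF
  have h0 : #{v | F.degree v = 0} ≤ Fintype.card F.ConnectedComponent := by
    rw [← card_univ]
    refine Finset.card_le_card_of_injOn F.connectedComponentMk (fun _ _ => by simp) ?_
    intro a ha b hb hab
    by_contra hne
    have hr : F.Reachable a b := SimpleGraph.ConnectedComponent.exact hab
    obtain ⟨p⟩ := hr
    cases p with
    | nil => exact hne rfl
    | cons hadj _ =>
      have : 0 < F.degree a := (F.degree_pos_iff_exists_adj a).2 ⟨_, hadj⟩
      simp at ha
      omega
  have key : ∀ v, 2 + (if 3 ≤ F.degree v then 1 else 0) ≤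
      F.degree v + (if F.degree v ≤ 1 then 1 else 0) + (if F.degree v = 0 then 1 else 0) := by
    intro v; split_ifs <;> omega
  have h7 := Finset.sum_le_sum (s := univ) (fun v _ => key v)
  simp only [Finset.sum_add_distrib, ← Finset.card_filter, sum_const, card_univ, smul_eq_mul] at h7
  omega

open Finset in
theorem few_fragments {V : Type*} [Fintype V] [DecidableEq V]
    (F : SimpleGraph V) [DecidableRel F.Adj] (hF : F.IsAcyclic)
    [Fintype (F.induce {v | F.degree v = 2}).ConnectedComponent] :
    Fintype.card (F.induce {v | F.degree v = 2}).ConnectedComponent ≤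
      #{v | ¬ F.degree v = 2} := by
  classical
  have hA := forest_sum F hF
  have hB := forest_sum _ (hF.induce {v | F.degree v = 2})
  have hT : Fintype.card ({v | F.degree v = 2} : Set V) = #{v | F.degree v = 2} := by
    rw [Fintype.card_subtype]; simp
  have hn : #{v | F.degree v = 2} + #{v | ¬ F.degree v = 2} = Fintype.card V :=
    Finset.card_filter_add_card_filter_not _
  have hs : ∑ v with F.degree v = 2, F.degree v + ∑ v with ¬ F.degree v = 2, F.degree v
      = ∑ v, F.degree v := Finset.sum_filter_add_sum_filter_not _ _ _
  have hs2 : ∑ v with F.degree v = 2, F.degree v = 2 * #{v | F.degree v = 2} := by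
    rw [Finset.sum_congr rfl (g := fun _ => 2) (by simp)]
    simp [mul_comm]
  have hsplit : ∀ v, F.degree v = #{w ∈ ({v | F.degree v = 2} : Finset V) | F.Adj v w}
      + #{w ∈ ({v | ¬ F.degree v = 2} : Finset V) | F.Adj v w} := by
    intro v
    rw [← SimpleGraph.card_neighborFinset_eq_degree,
      ← Finset.card_filter_add_card_filter_not (s := F.neighborFinset v)
        (fun w => F.degree w = 2)]
    congr 2 <;> ext w <;> simp [and_comm]
  have hI : ∑ v, (F.induce {v | F.degree v = 2}).degree v =
      ∑ v with F.degree v = 2, #{w ∈ ({v | F.degree v = 2} : Finset V) | F.Adj v w} := by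
    rw [Finset.sum_subtype (p := (· ∈ ({v | F.degree v = 2} : Set V))) _ (by simp)]
    refine Finset.sum_congr rfl fun v _ => ?_
    rw [← SimpleGraph.card_neighborFinset_eq_degree,
      ← Finset.card_map (Function.Embedding.subtype (· ∈ ({v | F.degree v = 2} : Set V))),
      SimpleGraph.map_neighborFinset_induce]
    congr 1; ext w; simp [and_comm]
  have hsD := Finset.sum_congr (rfl : ({v | F.degree v = 2} : Finset V) = _)
    (fun v _ => hsplit v)
  rw [Finset.sum_add_distrib] at hsD
  have hX : ∑ v with F.degree v = 2, #{w ∈ ({v | ¬ F.degree v = 2} : Finset V) | F.Adj v w}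
      = ∑ v with ¬ F.degree v = 2, #{w ∈ ({v | F.degree v = 2} : Finset V) | F.Adj w v} :=
    Finset.sum_card_bipartiteAbove_eq_sum_card_bipartiteBelow F.Adj
  have hY : ∑ v with ¬ F.degree v = 2, #{w ∈ ({v | F.degree v = 2} : Finset V) | F.Adj w v}
      ≤ ∑ v with ¬ F.degree v = 2, F.degree v := by
    refine Finset.sum_le_sum fun v _ => ?_
    have := hsplit v
    simp only [F.adj_comm v] at this
    omega
  omega

open Finset in
theorem small_fragments {V : Type*} [Fintype V] [DecidableEq V]
    (F : SimpleGraph V) [DecidableRel F.Adj] (c : ℕ)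
    [Fintype (F.induce {v | F.degree v = 2}).ConnectedComponent] (P : Finset V)
    (hP : ∀ v, F.degree v = 2 → (∃ S : Finset V, v ∈ S ∧ c ≤ S.card ∧
          (∀ u ∈ S, F.degree u = 2) ∧ (F.induce (↑S : Set V)).Connected) → v ∈ P) :
    #{v | F.degree v = 2 ∧ v ∉ P} ≤
      (c - 1) * Fintype.card (F.induce {v | F.degree v = 2}).ConnectedComponent := by
  classical
  have e : #{v | F.degree v = 2 ∧ v ∉ P} =
      #{v : ({v | F.degree v = 2} : Set V) | (v : V) ∉ P} := by
    rw [← Finset.card_map (Function.Embedding.subtype (· ∈ ({v | F.degree v = 2} : Set V)))]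
    congr 1; ext w; simp [and_comm]
  rw [e]
  refine (Finset.card_le_mul_card_image (f := (F.induce {v | F.degree v = 2}).connectedComponentMk) _ (c - 1) ?_).trans
    (Nat.mul_le_mul_left _ (Finset.card_le_univ _))
  intro C hC
  obtain ⟨v, hv, hvC⟩ := Finset.mem_image.1 hC
  simp only [mem_filter, mem_univ, true_and] at hv
  by_contra hlt
  apply hv
  let T : Finset ({v | F.degree v = 2} : Set V) := univ.filter (fun w => (F.induce {v | F.degree v = 2}).connectedComponentMk w = C)
  have hT : c ≤ #T := by
    have : #(filter (fun a => (F.induce {v | F.degree v = 2}).connectedComponentMk a = C)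
      ({v : ({v | F.degree v = 2} : Set V) | (v : V) ∉ P} : Finset _)) ≤ #T :=
      Finset.card_le_card (fun x hx => by simp [T] at hx ⊢; exact hx.2)
    omega
  refine hP v v.2 ⟨T.map (Function.Embedding.subtype _), ?_, ?_, ?_, ?_⟩
  · rw [Finset.mem_map]; exact ⟨v, by simpa [T] using hvC, rfl⟩
  · simpa using hT
  · intro u hu
    rw [Finset.mem_map] at hu
    obtain ⟨a, _, rfl⟩ := hu
    exact a.2
  · have hc : ((F.induce {v | F.degree v = 2}).induce C.supp).Connected := C.connected_toSimpleGraph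
    let f : (F.induce {v | F.degree v = 2}).induce C.supp →g F.induce (↑(T.map (Function.Embedding.subtype _)) : Set V) :=
      { toFun := fun x => ⟨x.1.1, by
          have := x.2
          rw [SimpleGraph.ConnectedComponent.mem_supp_iff] at this
          rw [Finset.mem_coe, Finset.mem_map]
          exact ⟨x.1, by simpa [T] using this, rfl⟩⟩
        map_rel' := fun {a b} h => h }
    refine hc.map f ?_
    rintro ⟨x, hx⟩
    have hx' := hx
    rw [Finset.mem_coe, Finset.mem_map] at hx'
    obtain ⟨a, ha, rfl⟩ := hx'
    exact ⟨⟨a, by simpa [T] using ha⟩, rfl⟩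


/-- Rake-and-compress counting. In a finite forest `F` on `n ≥ 1` vertices, if
`ℓ` is the number of vertices of degree at most `1` and `p` is the number of degree-`2`
vertices lying in a connected path fragment of at least `c` degree-`2` vertices, then
`ℓ + p ≥ n / (2c)`. -/
theorem stmt_5 {V : Type*} [Fintype V] [DecidableEq V]
    (F : SimpleGraph V) [DecidableRel F.Adj] (hF : F.IsAcyclic)
    (c : ℕ) (hc : 1 ≤ c) (hn : 1 ≤ Fintype.card V) :
    (Fintype.card V : ℝ) / (2 * c) ≤
      ({v : V | F.degree v ≤ 1}.ncard : ℝ) +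
      ({v : V | F.degree v = 2 ∧ ∃ S : Finset V, v ∈ S ∧ c ≤ S.card ∧
          (∀ u ∈ S, F.degree u = 2) ∧ (F.induce (↑S : Set V)).Connected}.ncard : ℝ) := by
  classical
  set P := {v : V | F.degree v = 2 ∧ ∃ S : Finset V, v ∈ S ∧ c ≤ S.card ∧
          (∀ u ∈ S, F.degree u = 2) ∧ (F.induce (↑S : Set V)).Connected} with hPdef
  have h1 := few_leaves F hF
  have h2 := few_fragments F hF
  have h3 := small_fragments F c P.toFinset
    (fun v hv hS => by rw [Set.mem_toFinset]; exact ⟨hv, hS⟩)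
  have hL : {v : V | F.degree v ≤ 1}.ncard
      = (Finset.univ.filter (fun v => F.degree v ≤ 1)).card := by
    rw [← Set.ncard_coe_finset]; simp
  have hPc : P.ncard = P.toFinset.card := by
    rw [← Set.ncard_coe_finset]; simp
  have h4 : (Finset.univ.filter (fun v => ¬ F.degree v = 2)).card ≤
      (Finset.univ.filter (fun v => F.degree v ≤ 1)).card +
      (Finset.univ.filter (fun v => 3 ≤ F.degree v)).card := by
    refine (Finset.card_le_card ?_).trans (Finset.card_union_le _ _)
    intro v hv
    simp only [Finset.mem_filter, Finset.mem_univ, true_and, Finset.mem_union] at hv ⊢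
    omega
  have h5 : Fintype.card V ≤ (Finset.univ.filter (fun v => ¬ F.degree v = 2)).card +
      (P.toFinset.card +
        (Finset.univ.filter (fun v => F.degree v = 2 ∧ v ∉ P.toFinset)).card) := by
    rw [← Finset.card_univ]
    refine (Finset.card_le_card ?_).trans ((Finset.card_union_le _ _).trans
      (Nat.add_le_add_left (Finset.card_union_le _ _) _))
    intro v _
    simp only [Finset.mem_filter, Finset.mem_univ, true_and, Finset.mem_union]
    tauto
  rw [hL, hPc, div_le_iff₀ (by positivity)]
  set L := (Finset.univ.filter (fun v => F.degree v ≤ 1)).card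
  set p := P.toFinset.card
  have h6 : Fintype.card V ≤ (L + p) * (2 * c) := by
    obtain ⟨d, rfl⟩ : ∃ d, c = d + 1 := ⟨c - 1, by omega⟩
    rw [Nat.add_sub_cancel] at h3
    have h7 := h3.trans (Nat.mul_le_mul_left d (h2.trans (h4.trans (Nat.add_le_add_left h1 _))))
    nlinarith [Nat.zero_le (d * p), Nat.zero_le p]
  exact_mod_cast h6
end

section
/- Let d, δ ≥ 2 and let Π = (d, δ, W, B) be a binary labeling problem that is (1,2)-resilient or (2,1)-resilient. Then every finite tree with a proper white/black 2-coloring of its vertices admits a solution to Π. -/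
/-- The binary labeling problem `(d, δ, W, B)` is `(t, s)`-resilient:
`W ∩ {i, …, i + (d - t)} ≠ ∅` for every `0 ≤ i ≤ t`, and
`B ∩ {i, …, i + (δ - s)} ≠ ∅` for every `0 ≤ i ≤ s`. -/
def Resilient (d δ t s : ℕ) (W B : Set ℕ) : Prop :=
  (∀ i ≤ t, ∃ j ∈ W, i ≤ j ∧ j ≤ i + (d - t)) ∧
  (∀ i ≤ s, ∃ j ∈ B, i ≤ j ∧ j ≤ i + (δ - s))

theorem exists_leaf_aux {V : Type*} [Fintype V] [DecidableEq V] (G : SimpleGraph V)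
    (hG : G.IsAcyclic) {a b : V} (hab : G.Adj a b) :
    ∃ v u, G.Adj v u ∧ ∀ w, G.Adj v w → w = u := by
  classical
  let P : ℕ → Prop := fun n => ∃ (x y : V) (p : G.Walk x y), p.IsPath ∧ p.length = n
  have hP1 : P 1 := ⟨a, b, hab.toWalk, by simp [hab.ne], by simp⟩
  have hcard : 1 ≤ Fintype.card V := Fintype.card_pos_iff.mpr ⟨a⟩
  have hspec : P (Nat.findGreatest P (Fintype.card V)) := Nat.findGreatest_spec hcard hP1
  have hge : 1 ≤ Nat.findGreatest P (Fintype.card V) := Nat.le_findGreatest hcard hP1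
  obtain ⟨x, y, p, hp, hlen⟩ := hspec
  have hnil : ¬ p.Nil := by
    rw [SimpleGraph.Walk.not_nil_iff_lt_length]; omega
  refine ⟨y, p.penultimate, (p.adj_penultimate hnil).symm, fun w hw => ?_⟩
  by_cases hs : w ∈ p.support
  · exact hG.eq_penultimate_of_adj_end hp hw hs
  · exfalso
    have hq := hp.concat hs hw
    have hP : P (p.length + 1) := ⟨x, w, _, hq, by simp⟩
    have hlt : p.length + 1 < Fintype.card V := by
      have := hq.length_lt
      simpa using this
    have := Nat.le_findGreatest hlt.le hP
    omega

theorem key_aux {V : Type*} [Fintype V] [DecidableEq V] (n : ℕ) :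
    ∀ (G : SimpleGraph V) [DecidableRel G.Adj], G.IsAcyclic → G.edgeFinset.card = n →
    ∀ S : V → Set ℕ, (∀ v, (∃ j ∈ S v, j ≤ G.degree v - 1) ∧
      (1 ≤ G.degree v → ∃ j ∈ S v, 1 ≤ j ∧ j ≤ G.degree v)) →
    ∃ X : Finset (Sym2 V), ↑X ⊆ G.edgeSet ∧ ∀ v, degIn G X v ∈ S v := by
  induction n with
  | zero =>
    intro G _ hG hn S hS
    refine ⟨∅, by simp, fun v => ?_⟩
    have hbot : G = ⊥ := by
      rw [Finset.card_eq_zero] at hn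
      simpa using hn
    have hd : G.degree v = 0 := by subst hbot; simp
    obtain ⟨⟨j, hj, hj'⟩, -⟩ := hS v
    have : j = 0 := by omega
    subst this
    simpa [degIn] using hj
  | succ n ih =>
    intro G _ hG hn S hS
    have hne : G.edgeFinset.Nonempty := by rw [← Finset.card_pos]; omega
    obtain ⟨e, he⟩ := hne
    obtain ⟨v, u, hvu, huniq⟩ : ∃ v u, G.Adj v u ∧ ∀ w, G.Adj v w → w = u := by
      induction e with
      | h a b => exact exists_leaf_aux G hG (by simpa using he)
    have hvne : v ≠ u := hvu.ne
    let G' : SimpleGraph V := G.deleteEdges (({s(v, u)} : Finset (Sym2 V)) : Set (Sym2 V))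
    have : DecidableRel G'.Adj := Classical.decRel _
    have hadj : ∀ x y, G'.Adj x y ↔ G.Adj x y ∧ s(x, y) ≠ s(v, u) := by
      intro x y; simp [G', SimpleGraph.deleteEdges_adj]
    have hle : G' ≤ G := fun x y h => ((hadj x y).1 h).1
    have hG' : G'.IsAcyclic := hG.anti hle
    have hn' : G'.edgeFinset.card = n := by
      have : G'.edgeFinset = G.edgeFinset.erase s(v, u) := by
        ext e
        induction e with
        | h a b => simp [hadj, and_comm]
      rw [this, Finset.card_erase_of_mem (by simpa using hvu)]
      omega
    have hdu : G'.degree u + 1 = G.degree u := by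
      have : G'.neighborFinset u = (G.neighborFinset u).erase v := by
        ext w
        simp only [SimpleGraph.mem_neighborFinset, hadj, Finset.mem_erase]
        grind
      rw [← SimpleGraph.card_neighborFinset_eq_degree, this,
        ← SimpleGraph.card_neighborFinset_eq_degree]
      exact Finset.card_erase_add_one (by simpa using hvu.symm)
    have hdx : ∀ x, x ≠ u → x ≠ v → G'.degree x = G.degree x := by
      intro x hxu hxv
      have : G'.neighborFinset x = G.neighborFinset x := by
        ext w
        simp only [SimpleGraph.mem_neighborFinset, hadj]
        grind
      rw [← SimpleGraph.card_neighborFinset_eq_degree, this,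
        ← SimpleGraph.card_neighborFinset_eq_degree]
    have hdv : G.degree v = 1 := by
      rw [SimpleGraph.degree_eq_one_iff_existsUnique_adj]
      exact ⟨u, hvu, huniq⟩
    obtain ⟨X, hX, hXS⟩ := ih G' hG' hn'
      (fun x => if x = u then {j | j ∈ S u ∨ j + 1 ∈ S u} else if x = v then Set.univ else S x) (by
      intro x
      by_cases hxu : x = u
      · subst hxu
        simp only [if_true, Set.mem_ofPred_eq]
        obtain ⟨⟨j, hj, hj1⟩, h2⟩ := hS x
        obtain ⟨k, hk, hk1, hk2⟩ := h2 (by omega)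
        constructor
        · by_cases h : j ≤ G'.degree x - 1
          · exact ⟨j, Or.inl hj, h⟩
          · refine ⟨j - 1, Or.inr ?_, by omega⟩
            rwa [Nat.sub_add_cancel (by omega)]
        · intro h1
          by_cases h : k ≤ G'.degree x
          · exact ⟨k, Or.inl hk, hk1, h⟩
          · refine ⟨k - 1, Or.inr ?_, by omega, by omega⟩
            rwa [Nat.sub_add_cancel (by omega)]
      · by_cases hxv : x = v
        · simp only [if_neg hxu, if_pos hxv]
          exact ⟨⟨0, trivial, by omega⟩, fun h => ⟨1, trivial, le_rfl, h⟩⟩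
        · simp only [if_neg hxu, if_neg hxv, hdx x hxu hxv]
          exact hS x)
    have hnot : s(v, u) ∉ X := by
      intro h
      have := hX h
      rw [SimpleGraph.mem_edgeSet, hadj] at this
      exact this.2 rfl
    have hXG : ∀ x y, s(x, y) ∈ X → s(x, y) ≠ s(v, u) := by
      intro x y h h'; rw [h'] at h; exact hnot h
    have hv : ∀ Y : Finset (Sym2 V), degIn G Y v ∈ S v := by
      intro Y
      have h1 : degIn G Y v ≤ 1 := by
        rw [← hdv]; exact Finset.card_le_card (Finset.filter_subset _ _)
      obtain ⟨⟨j, hj, hj1⟩, h2⟩ := hS v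
      obtain ⟨k, hk, hk1, hk2⟩ := h2 (by omega)
      have hj0 : j = 0 := by omega
      have hk0 : k = 1 := by omega
      subst hj0 hk0
      rcases Nat.le_one_iff_eq_zero_or_eq_one.1 h1 with h | h <;> rw [h] <;> assumption
    have hsame : ∀ x, degIn G X x = degIn G' X x := by
      intro x
      unfold degIn
      congr 1
      ext w
      simp only [Finset.mem_filter, SimpleGraph.mem_neighborFinset, hadj]
      grind
    have hXE : (X : Set (Sym2 V)) ⊆ G.edgeSet :=
      hX.trans (SimpleGraph.edgeSet_mono hle)
    have hu := hXS u
    simp only [if_true, Set.mem_ofPred_eq] at hu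
    rcases hu with hu | hu
    · refine ⟨X, hXE, fun x => ?_⟩
      by_cases hxv : x = v
      · subst hxv; exact hv X
      by_cases hxu : x = u
      · subst hxu; rwa [hsame]
      · have := hXS x
        simp only [if_neg hxu, if_neg hxv] at this
        rwa [hsame]
    · refine ⟨insert s(v, u) X, ?_, fun x => ?_⟩
      · rw [Finset.coe_insert]
        exact Set.insert_subset (by simpa using hvu) hXE
      by_cases hxv : x = v
      · subst hxv; exact hv _
      by_cases hxu : x = u
      · subst hxu
        have : degIn G (insert s(v, x) X) x = degIn G X x + 1 := by
          unfold degIn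
          rw [← Finset.card_insert_of_notMem (a := v)]
          · congr 1
            ext w
            simp only [Finset.mem_filter, SimpleGraph.mem_neighborFinset, Finset.mem_insert]
            have := hvu.symm
            grind
          · simp only [Finset.mem_filter, not_and]
            intro _ h
            rw [Sym2.eq_swap] at h
            exact hnot h
        rwa [this, hsame]
      · have h1 := hXS x
        simp only [if_neg hxu, if_neg hxv] at h1
        have : degIn G (insert s(v, u) X) x = degIn G X x := by
          unfold degIn
          congr 1
          ext w
          simp only [Finset.mem_filter, SimpleGraph.mem_neighborFinset, Finset.mem_insert]
          grind
        rwa [this, hsame]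

/-- A `(1,2)`-resilient or `(2,1)`-resilient binary labeling problem admits a
solution on every finite tree with a proper white/black 2-coloring. -/
theorem stmt_7 {V : Type*} [Fintype V] [DecidableEq V]
    (G : SimpleGraph V) [DecidableRel G.Adj] (hT : G.IsTree)
    (d δ : ℕ) (hd : 2 ≤ d) (hδ : 2 ≤ δ)
    (W B : Set ℕ) (hWd : ∀ x ∈ W, x ≤ d) (hBδ : ∀ x ∈ B, x ≤ δ)
    (hres : Resilient d δ 1 2 W B ∨ Resilient d δ 2 1 W B)
    (color : V → Bool)
    (hproper : ∀ ⦃u v : V⦄, G.Adj u v → color u ≠ color v) :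
    ∃ X : Finset (Sym2 V), ↑X ⊆ G.edgeSet ∧
      (∀ w : V, color w = true → G.degree w = d → degIn G X w ∈ W) ∧
      (∀ w : V, color w = false → G.degree w = δ → degIn G X w ∈ B) := by

  have hW : (∃ j ∈ W, j ≤ d - 1) ∧ ∃ j ∈ W, 1 ≤ j ∧ j ≤ d := by
    rcases hres with h | h
    · obtain ⟨j, hj, h1, h2⟩ := h.1 0 (by omega)
      obtain ⟨k, hk, h3, h4⟩ := h.1 1 (by omega)
      exact ⟨⟨j, hj, by omega⟩, k, hk, by omega, by omega⟩
    · obtain ⟨j, hj, h1, h2⟩ := h.1 0 (by omega)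
      obtain ⟨k, hk, h3, h4⟩ := h.1 1 (by omega)
      exact ⟨⟨j, hj, by omega⟩, k, hk, by omega, by omega⟩
  have hB : (∃ j ∈ B, j ≤ δ - 1) ∧ ∃ j ∈ B, 1 ≤ j ∧ j ≤ δ := by
    rcases hres with h | h
    · obtain ⟨j, hj, h1, h2⟩ := h.2 0 (by omega)
      obtain ⟨k, hk, h3, h4⟩ := h.2 1 (by omega)
      exact ⟨⟨j, hj, by omega⟩, k, hk, by omega, by omega⟩
    · obtain ⟨j, hj, h1, h2⟩ := h.2 0 (by omega)
      obtain ⟨k, hk, h3, h4⟩ := h.2 1 (by omega)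
      exact ⟨⟨j, hj, by omega⟩, k, hk, by omega, by omega⟩
  obtain ⟨X, hX, h⟩ := key_aux _ G hT.isAcyclic rfl
    (fun v => {j | (color v = true → G.degree v = d → j ∈ W) ∧
      (color v = false → G.degree v = δ → j ∈ B)}) (by
    intro v
    simp only [Set.mem_ofPred_eq]
    cases hc : color v
    · by_cases hdeg : G.degree v = δ
      · simpa [hdeg] using ⟨hB.1, fun _ => hB.2⟩
      · simp only [hdeg]
        exact ⟨⟨0, by simp, by omega⟩, fun h => ⟨1, by simp, le_rfl, h⟩⟩
    · by_cases hdeg : G.degree v = d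
      · simpa [hdeg] using ⟨hW.1, fun _ => hW.2⟩
      · simp only [hdeg]
        exact ⟨⟨0, by simp, by omega⟩, fun h => ⟨1, by simp, le_rfl, h⟩⟩)
  exact ⟨X, hX, fun w => (h w).1, fun w => (h w).2⟩
end

section
/- Let d ≥ 3 and δ ≥ 3 be integers. Every finite tree with a proper white/black 2-coloring of its vertices admits a set X of edges such that every white vertex of degree exactly d is incident to exactly one edge of X and every black vertex of degree exactly δ is incident to exactly one edge of X. -/
theorem aux_parent_unique {V : Type*} (G : SimpleGraph V) (hT : G.IsTree) (r u₁ u₂ v : V)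
    (h1 : G.Adj u₁ v) (h2 : G.Adj u₂ v) (d1 : G.dist r v = G.dist r u₁ + 1)
    (d2 : G.dist r v = G.dist r u₂ + 1) : u₁ = u₂ := by
  obtain ⟨p, hp⟩ := hT.connected.exists_walk_length_eq_dist r u₁
  obtain ⟨q, hq⟩ := hT.connected.exists_walk_length_eq_dist r u₂
  have hp' : (p.concat h1).IsPath :=
    SimpleGraph.Walk.isPath_of_length_eq_dist _ (by rw [SimpleGraph.Walk.length_concat]; omega)
  have hq' : (q.concat h2).IsPath :=
    SimpleGraph.Walk.isPath_of_length_eq_dist _ (by rw [SimpleGraph.Walk.length_concat]; omega)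
  have := (hT.existsUnique_path r v).unique hp' hq'
  simpa using congrArg SimpleGraph.Walk.penultimate this

/-- Auxiliary recursion along the parent function. -/
def auxSel {V : Type*} (S : V → Prop) (p c : V → V) : ℕ → V → Prop
  | 0, _ => False
  | n + 1, u => S (p u) ∧ c (p u) = u ∧ ¬ auxSel S p c n (p u)

theorem aux_main {V : Type*} [Fintype V] [DecidableEq V]
    (G : SimpleGraph V) [DecidableRel G.Adj] (hT : G.IsTree) :
    ∃ X : Finset (Sym2 V), ↑X ⊆ G.edgeSet ∧ ∀ w, 2 ≤ G.degree w → degIn G X w = 1 := by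
  classical
  obtain ⟨r⟩ := hT.connected.nonempty
  have hpar : ∀ v, ∃ u, ∀ w, G.Adj w v → G.dist r v = G.dist r w + 1 → u = w := by
    intro v
    by_cases h : ∃ u, G.Adj u v ∧ G.dist r v = G.dist r u + 1
    · obtain ⟨u, hu, hd⟩ := h
      exact ⟨u, fun w hw hd' => aux_parent_unique G hT r u w v hu hw hd hd'⟩
    · exact ⟨v, fun w hw hd' => (h ⟨w, hw, hd'⟩).elim⟩
  choose p hp using hpar
  have hch : ∀ v, ∃ u, 2 ≤ G.degree v → G.Adj v u ∧ G.dist r u = G.dist r v + 1 := by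
    intro v
    by_cases h : 2 ≤ G.degree v
    · obtain ⟨a, ha, b, hb, hab⟩ := Finset.one_lt_card.mp (show 1 < (G.neighborFinset v).card from h)
      rw [SimpleGraph.mem_neighborFinset] at ha hb
      rcases hT.dist_eq_dist_add_one_of_adj r ha with h1 | h1
      · rcases hT.dist_eq_dist_add_one_of_adj r hb with h2 | h2
        · exact (hab ((hp v a ha.symm h1).symm.trans (hp v b hb.symm h2))).elim
        · exact ⟨b, fun _ => ⟨hb, h2⟩⟩
      · exact ⟨a, fun _ => ⟨ha, h1⟩⟩
    · exact ⟨v, fun h' => (h h').elim⟩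
  choose c hc using hch
  have hpc : ∀ v, 2 ≤ G.degree v → p (c v) = v := fun v hv =>
    hp _ _ (hc v hv).1 (hc v hv).2
  obtain ⟨sel, hsel⟩ : ∃ sel : V → Prop,
      ∀ u, sel u ↔ 2 ≤ G.degree (p u) ∧ c (p u) = u ∧ ¬ sel (p u) := by
    refine ⟨fun u => auxSel (fun v => 2 ≤ G.degree v) p c (G.dist r u) u, fun u => ?_⟩
    by_cases h : 2 ≤ G.degree (p u) ∧ c (p u) = u
    · have hd := (hc _ h.1).2
      rw [h.2] at hd
      simp only [hd, auxSel]
    · constructor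
      · intro h'
        cases hn : G.dist r u with
        | zero => simp only [hn, auxSel] at h'
        | succ n =>
          simp only [hn, auxSel] at h'
          exact (h ⟨h'.1, h'.2.1⟩).elim
      · intro h'
        exact (h ⟨h'.1, h'.2.1⟩).elim
  have hX : ∀ e, e ∈ (Finset.univ.filter (fun v => 2 ≤ G.degree v ∧ ¬ sel v)).image
      (fun v => s(v, c v)) ↔ ∃ v, (2 ≤ G.degree v ∧ ¬ sel v) ∧ s(v, c v) = e := by
    intro e; simp
  refine ⟨(Finset.univ.filter (fun v => 2 ≤ G.degree v ∧ ¬ sel v)).image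
      (fun v => s(v, c v)), ?_, ?_⟩
  · intro e he
    obtain ⟨v, hv, rfl⟩ := (hX e).1 he
    exact (hc v hv.1).1
  · intro w hw
    unfold degIn
    rw [Finset.card_eq_one]
    by_cases hs : sel w
    · obtain ⟨h1, h2, h3⟩ := (hsel w).1 hs
      refine ⟨p w, ?_⟩
      ext u
      rw [Finset.mem_filter, hX, SimpleGraph.mem_neighborFinset, Finset.mem_singleton]
      constructor
      · rintro ⟨-, v, hv, he⟩
        rcases Sym2.eq_iff.1 he with ⟨rfl, -⟩ | ⟨rfl, rfl⟩
        · exact (hv.2 hs).elim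
        · exact (hpc v hv.1).symm
      · rintro rfl
        refine ⟨?_, p w, ⟨h1, h3⟩, ?_⟩
        · have := (hc _ h1).1
          rw [h2] at this
          exact this.symm
        · rw [h2]; exact Sym2.eq_swap
    · refine ⟨c w, ?_⟩
      ext u
      rw [Finset.mem_filter, hX, SimpleGraph.mem_neighborFinset, Finset.mem_singleton]
      constructor
      · rintro ⟨-, v, hv, he⟩
        rcases Sym2.eq_iff.1 he with ⟨rfl, rfl⟩ | ⟨rfl, rfl⟩
        · rfl
        · refine (hs ((hsel _).2 ?_)).elim
          rw [hpc v hv.1]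
          exact ⟨hv.1, rfl, hv.2⟩
      · rintro rfl
        exact ⟨(hc w hw).1, w, ⟨hw, hs⟩, rfl⟩

/-- For `d, δ ≥ 3`, every finite tree with a proper white/black 2-coloring admits
a set `X` of edges such that every white vertex of degree exactly `d` and every black vertex
of degree exactly `δ` is incident to exactly one edge of `X` (hypergraph matching). -/
theorem stmt_8 {V : Type*} [Fintype V] [DecidableEq V]
    (G : SimpleGraph V) [DecidableRel G.Adj] (hT : G.IsTree)
    (d δ : ℕ) (hd : 3 ≤ d) (hδ : 3 ≤ δ)
    (color : V → Bool)
    (hproper : ∀ ⦃u v : V⦄, G.Adj u v → color u ≠ color v) :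
    ∃ X : Finset (Sym2 V), ↑X ⊆ G.edgeSet ∧
      (∀ w : V, color w = true → G.degree w = d → degIn G X w = 1) ∧
      (∀ w : V, color w = false → G.degree w = δ → degIn G X w = 1) := by
  obtain ⟨X, hX, h⟩ := aux_main G hT
  exact ⟨X, hX, fun w _ hw => h w (by omega), fun w _ hw => h w (by omega)⟩
end

section
/- Let d ≥ 3 and δ ≥ 2 be integers. Every finite tree with a proper white/black 2-coloring of its vertices admits a set X of edges such that every white vertex of degree exactly d is incident to exactly one edge of X and every black vertex of degree exactly δ is incident to either 0 or δ edges of X. -/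
theorem aux_root {V : Type*} (G : SimpleGraph V) (hT : G.IsTree) (r : V) :
    ∃ (p : V → V) (l : V → ℕ),
      (∀ v, v ≠ r → G.Adj v (p v) ∧ l (p v) < l v) ∧
      (∀ u w, G.Adj u w → (p w = u ∧ w ≠ r) ∨ (p u = w ∧ u ≠ r)) := by
  classical
  have hex := fun v => (hT.existsUnique_path v r)
  choose P hP hU using hex
  have key : ∀ u w, G.Adj w u → w ∉ (P u).support →
      (P w).snd = u ∧ w ≠ r ∧ (P w).length = (P u).length + 1 := by
    intro u w h hn
    have h1 : SimpleGraph.Walk.cons h (P u) = P w :=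
      hU w _ ((SimpleGraph.Walk.cons_isPath_iff _ _).2 ⟨hP u, hn⟩)
    rw [← h1]
    refine ⟨by simp, ?_, by simp⟩
    rintro rfl
    exact hn (P u).end_mem_support
  have tot : ∀ u w, G.Adj u w → w ∉ (P u).support ∨ u ∉ (P w).support := by
    intro u w h
    by_contra! hc
    obtain ⟨h1, h2⟩ := hc
    have e1 := hU w _ ((hP u).dropUntil h1)
    have e2 := hU u _ ((hP w).dropUntil h2)
    have l1 := congrArg SimpleGraph.Walk.length (SimpleGraph.Walk.take_spec (P u) h1)
    have l2 := congrArg SimpleGraph.Walk.length (SimpleGraph.Walk.take_spec (P w) h2)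
    simp only [SimpleGraph.Walk.length_append] at l1 l2
    rw [e1] at l1
    rw [e2] at l2
    have : ((P u).takeUntil w h1).length = 0 := by omega
    exact h.ne (SimpleGraph.Walk.eq_of_length_eq_zero this)
  have tot2 : ∀ u w, G.Adj u w → 
      ((P w).snd = u ∧ w ≠ r ∧ (P w).length = (P u).length + 1) ∨ 
      ((P u).snd = w ∧ u ≠ r ∧ (P u).length = (P w).length + 1) := by
    intro u w h
    rcases tot u w h with h1 | h1
    · exact Or.inl (key u w h.symm h1)
    · exact Or.inr (key w u h h1)
  refine ⟨fun v => (P v).snd, fun v => (P v).length, ?_, ?_⟩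
  · intro v hv
    have ha : G.Adj v (P v).snd :=
      SimpleGraph.Walk.adj_snd (SimpleGraph.Walk.not_nil_of_ne hv)
    refine ⟨ha, ?_⟩
    have hl : (P v).tail = P (P v).snd := hU _ _ (hP v).tail
    have := SimpleGraph.Walk.length_tail_add_one (SimpleGraph.Walk.not_nil_of_ne (p := P v) hv)
    rw [hl] at this
    show (P (P v).snd).length < (P v).length
    omega
  · intro u w h
    rcases tot2 u w h with h1 | h1
    · exact Or.inl ⟨h1.1, h1.2.1⟩
    · exact Or.inr ⟨h1.1, h1.2.1⟩

theorem aux_rec {V : Type*} (p c : V → V) (l : V → ℕ) (r : V)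
    (hl : ∀ v, v ≠ r → l (p v) < l v) :
    ∃ S : V → Prop, ∀ b, S b ↔ (b ≠ r ∧ b = c (p b) ∧ (p b = r ∨ ¬ S (p (p b)))) := by
  classical
  have : ∀ n : ℕ, ∃ S : V → Prop, ∀ b, l b < n →
      (S b ↔ (b ≠ r ∧ b = c (p b) ∧ (p b = r ∨ ¬ S (p (p b))))) := by
    intro n
    induction n with
    | zero => exact ⟨fun _ => False, fun b hb => absurd hb (by omega)⟩
    | succ n ih =>
      obtain ⟨S, hS⟩ := ih
      refine ⟨fun b => b ≠ r ∧ b = c (p b) ∧ (p b = r ∨ ¬ S (p (p b))), fun b hb => ?_⟩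
      by_cases h1 : b = r
      · simp [h1]
      by_cases h2 : p b = r
      · simp [h2]
      have := hl b h1
      have := hl _ h2
      have := hS (p (p b)) (by omega)
      beta_reduce
      rw [← this]
  choose S hS using this
  -- consistency
  have cons : ∀ k : ℕ, ∀ b, l b < k → ∀ m n, l b < m → l b < n → (S m b ↔ S n b) := by
    intro k
    induction k with
    | zero => intro b hb; omega
    | succ k ih =>
      intro b hb m n hm hn
      rw [hS m b hm, hS n b hn]
      by_cases h1 : b = r
      · simp [h1]
      by_cases h2 : p b = r
      · simp [h2]
      have := hl b h1
      have := hl _ h2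
      rw [ih (p (p b)) (by omega) m n (by omega) (by omega)]
  refine ⟨fun b => S (l b + 1) b, fun b => ?_⟩
  show S (l b + 1) b ↔ _
  rw [hS _ b (by omega)]
  by_cases h1 : b = r
  · simp [h1]
  by_cases h2 : p b = r
  · simp [h2]
  have := hl b h1
  have := hl _ h2
  rw [cons (l b) (p (p b)) (by omega) (l b + 1) (l (p (p b)) + 1) (by omega) (by omega)]

theorem stmt_9 {V : Type*} [Fintype V] [DecidableEq V]
    (G : SimpleGraph V) [DecidableRel G.Adj] (hT : G.IsTree)
    (d δ : ℕ) (hd : 3 ≤ d) (hδ : 2 ≤ δ)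
    (color : V → Bool)
    (hproper : ∀ ⦃u v : V⦄, G.Adj u v → color u ≠ color v) :
    ∃ X : Finset (Sym2 V), ↑X ⊆ G.edgeSet ∧
      (∀ w : V, color w = true → G.degree w = d → degIn G X w = 1) ∧
      (∀ w : V, color w = false → G.degree w = δ →
        (degIn G X w = 0 ∨ degIn G X w = δ)) := by
  classical
  obtain ⟨r⟩ := hT.connected.nonempty
  obtain ⟨p, l, hp, ht⟩ := aux_root G hT r
  have hc : ∀ w, ∃ u, 2 ≤ G.degree w → G.Adj w u ∧ u ≠ p w := by
    intro w
    by_cases h : 2 ≤ G.degree w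
    · obtain ⟨u, hu, hne⟩ := Finset.exists_mem_ne (s := G.neighborFinset w) (by simp; omega) (p w)
      exact ⟨u, fun _ => ⟨by simpa using hu, hne⟩⟩
    · exact ⟨w, fun h' => absurd h' h⟩
  -- at the root any neighbour is a child
  choose c hc using hc
  obtain ⟨S, hS⟩ := aux_rec p c l r (fun v hv => (hp v hv).2)
  refine ⟨G.edgeFinset.filter (fun e => ∃ b ∈ e, color b = false ∧ S b), ?_, ?_, ?_⟩
  · intro e he
    simp at he
    exact he.1
  · intro w hw hdeg
    obtain ⟨hcw, hcp⟩ := hc w (by omega)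
    have hpc : p (c w) = w ∧ c w ≠ r := by
      rcases ht w (c w) hcw with h | h
      · exact h
      · exact absurd h.1.symm hcp
    have main : ∃ u, ∀ v, (G.Adj w v ∧ S v) ↔ v = u := by
      by_cases hs : w ≠ r ∧ S (p w)
      · refine ⟨p w, fun v => ⟨?_, ?_⟩⟩
        · rintro ⟨h1, h2⟩
          rcases ht w v h1 with h | h
          · have := (hS v).1 h2
            rw [h.1] at this
            tauto
          · exact h.1.symm
        · rintro rfl
          exact ⟨(hp w hs.1).1, hs.2⟩
      · refine ⟨c w, fun v => ⟨?_, ?_⟩⟩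
        · rintro ⟨h1, h2⟩
          rcases ht w v h1 with h | h
          · have := (hS v).1 h2
            rw [h.1] at this
            tauto
          · exact absurd ⟨h.2, h.1 ▸ h2⟩ hs
        · rintro rfl
          refine ⟨hcw, (hS _).2 ⟨hpc.2, by rw [hpc.1], ?_⟩⟩
          rw [hpc.1]
          tauto
    obtain ⟨u, hu⟩ := main
    unfold degIn
    rw [Finset.card_eq_one]
    refine ⟨u, ?_⟩
    ext v
    rw [Finset.mem_singleton, ← hu v]
    simp only [Finset.mem_filter, SimpleGraph.mem_neighborFinset, SimpleGraph.mem_edgeFinset,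
      SimpleGraph.mem_edgeSet, Sym2.mem_iff]
    constructor
    · rintro ⟨h1, -, b, rfl | rfl, hb, hb2⟩
      · simp [hw] at hb
      · exact ⟨h1, hb2⟩
    · rintro ⟨h1, h2⟩
      refine ⟨h1, h1, v, Or.inr rfl, ?_, h2⟩
      have := hproper h1
      rw [hw] at this
      simpa using this.symm
  · intro w hw hdeg
    unfold degIn
    by_cases hs : S w
    · right
      rw [Finset.filter_true_of_mem]
      · simpa using hdeg
      · intro v hv
        simp at hv
        simp [hv, hw, hs]
    · left
      rw [Finset.card_eq_zero, Finset.filter_eq_empty_iff]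
      intro v hv
      simp at hv
      have := hproper hv
      rw [hw] at this
      simp [hw, hs]
      simp at this
      simp [this]
end

section
/- Let Π = (d, δ, W, B) be a binary labeling problem with d ≥ 3 or δ ≥ 3 that is not of type I, II, III, or IV. Then there exist W″ with W ⊆ W″ ⊆ {0,1,…,d} and B″ with B ⊆ B″ ⊆ {0,1,…,δ} such that the problem (d, δ, W″, B″) is equivalent to a forbidden degree problem — a problem of the form (d₀, δ₀, {0,…,d₀}∖{i}, {1,…,δ₀−1}) for some integer i with 0 < i < d₀ — or to the bipartite sinkless orientation problem — a problem of the form (d₀, δ₀, {0,…,d₀−1}, {1,…,δ₀}). -/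
/-- `(d₂, δ₂, W₂, B₂)` is equivalent to `(d₁, δ₁, W₁, B₁)`: it equals the problem itself, or
is obtained from it by exchanging colors, complementing, or both. -/
def EquivProb (d₁ δ₁ : ℕ) (W₁ B₁ : Set ℕ) (d₂ δ₂ : ℕ) (W₂ B₂ : Set ℕ) : Prop :=
  (d₂ = d₁ ∧ δ₂ = δ₁ ∧ W₂ = W₁ ∧ B₂ = B₁) ∨
  (d₂ = δ₁ ∧ δ₂ = d₁ ∧ W₂ = B₁ ∧ B₂ = W₁) ∨
  (d₂ = d₁ ∧ δ₂ = δ₁ ∧ W₂ = (fun x => d₁ - x) '' W₁ ∧ B₂ = (fun x => δ₁ - x) '' B₁) ∨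
  (d₂ = δ₁ ∧ δ₂ = d₁ ∧ W₂ = (fun x => δ₁ - x) '' B₁ ∧ B₂ = (fun x => d₁ - x) '' W₁)

def TypeI (d δ : ℕ) (W B : Set ℕ) : Prop :=
  (W = {0} ∧ 0 ∉ B) ∨ (W = {d} ∧ δ ∉ B) ∨ (0 ∉ W ∧ B = {0}) ∨ (d ∉ W ∧ B = {δ})

def TypeII (W B : Set ℕ) : Prop := W = ∅ ∨ B = ∅

def TypeIII (d δ : ℕ) (W B : Set ℕ) : Prop :=
  (W ≠ ∅ ∧ B = Set.Icc 0 δ) ∨ (W = Set.Icc 0 d ∧ B ≠ ∅)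

def TypeIV (d δ : ℕ) (W B : Set ℕ) : Prop :=
  (0 ∈ W ∧ 0 ∈ B) ∨ (d ∈ W ∧ δ ∈ B)

/-- Any binary labeling problem with `d ≥ 3` or `δ ≥ 3` that is not of type
I–IV can be relaxed to a problem equivalent to a forbidden degree problem
`(d₀, δ₀, {0,…,d₀} \ {i}, {1,…,δ₀-1})` with `0 < i < d₀`, or to the bipartite sinkless
orientation problem `(d₀, δ₀, {0,…,d₀-1}, {1,…,δ₀})`. -/
theorem stmt_11 (d δ : ℕ) (hd : 2 ≤ d) (hδ : 2 ≤ δ) (hdδ : 3 ≤ d ∨ 3 ≤ δ)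
    (W B : Set ℕ) (hWd : ∀ x ∈ W, x ≤ d) (hBδ : ∀ x ∈ B, x ≤ δ)
    (h1 : ¬ TypeI d δ W B) (h2 : ¬ TypeII W B) (h3 : ¬ TypeIII d δ W B)
    (h4 : ¬ TypeIV d δ W B) :
    ∃ W'' B'' : Set ℕ, W ⊆ W'' ∧ (∀ x ∈ W'', x ≤ d) ∧ B ⊆ B'' ∧ (∀ x ∈ B'', x ≤ δ) ∧
      ((∃ d₀ δ₀ i : ℕ, 2 ≤ d₀ ∧ 2 ≤ δ₀ ∧ 0 < i ∧ i < d₀ ∧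
          EquivProb d δ W'' B'' d₀ δ₀ (Set.Icc 0 d₀ \ {i}) (Set.Icc 1 (δ₀ - 1))) ∨
       (∃ d₀ δ₀ : ℕ, 2 ≤ d₀ ∧ 2 ≤ δ₀ ∧
          EquivProb d δ W'' B'' d₀ δ₀ (Set.Icc 0 (d₀ - 1)) (Set.Icc 1 δ₀))) := by
  have pos : ∀ {S : Set ℕ}, 0 ∉ S → ∀ x ∈ S, 1 ≤ x := by
    intro S h x hx
    rcases Nat.eq_zero_or_pos x with h0 | h0
    · exact absurd (h0 ▸ hx) h
    · exact h0
  have lst : ∀ {S : Set ℕ} {n : ℕ}, (∀ x ∈ S, x ≤ n) → n ∉ S → ∀ x ∈ S, x ≤ n - 1 := by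
    intro S n hS h x hx
    have h5 := hS x hx
    have h6 : x ≠ n := fun e => h (e ▸ hx)
    omega
  have miss : ∀ {S : Set ℕ} {n : ℕ}, (∀ x ∈ S, x ≤ n) → S ≠ Set.Icc 0 n → 0 ∈ S → n ∈ S →
      ∃ i, 0 < i ∧ i < n ∧ i ∉ S := by
    intro S n hS hne h0 hn
    by_contra! hc
    apply hne
    ext x
    refine ⟨fun hx => ⟨Nat.zero_le _, hS x hx⟩, fun hx => ?_⟩
    rcases Nat.eq_zero_or_pos x with e | e
    · exact e ▸ h0
    · rcases Nat.lt_or_eq_of_le hx.2 with f | f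
      · exact hc x e f
      · exact f ▸ hn
  have hW : W ≠ ∅ := fun e => h2 (Or.inl e)
  have hB : B ≠ ∅ := fun e => h2 (Or.inr e)
  have hB' : B ≠ Set.Icc 0 δ := fun e => h3 (Or.inl ⟨hW, e⟩)
  have hW' : W ≠ Set.Icc 0 d := fun e => h3 (Or.inr ⟨e, hB⟩)
  have h40 : ¬ (0 ∈ W ∧ 0 ∈ B) := fun e => h4 (Or.inl e)
  have h4d : ¬ (d ∈ W ∧ δ ∈ B) := fun e => h4 (Or.inr e)
  by_cases c1 : d ∉ W ∧ 0 ∉ B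
  · exact ⟨Set.Icc 0 (d-1), Set.Icc 1 δ, fun x hx => ⟨Nat.zero_le _, lst hWd c1.1 x hx⟩,
      fun x hx => hx.2.trans (Nat.sub_le _ _), fun x hx => ⟨pos c1.2 x hx, hBδ x hx⟩,
      fun x hx => hx.2, Or.inr ⟨d, δ, hd, hδ, Or.inl ⟨rfl, rfl, rfl, rfl⟩⟩⟩
  by_cases c2 : 0 ∉ W ∧ δ ∉ B
  · exact ⟨Set.Icc 1 d, Set.Icc 0 (δ-1), fun x hx => ⟨pos c2.1 x hx, hWd x hx⟩,
      fun x hx => hx.2, fun x hx => ⟨Nat.zero_le _, lst hBδ c2.2 x hx⟩,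
      fun x hx => hx.2.trans (Nat.sub_le _ _),
      Or.inr ⟨δ, d, hδ, hd, Or.inr (Or.inl ⟨rfl, rfl, rfl, rfl⟩)⟩⟩
  by_cases c3 : d ∈ W
  · have b1 : δ ∉ B := by tauto
    have b2 : 0 ∈ W := by tauto
    have b3 : 0 ∉ B := by tauto
    obtain ⟨i, i0, id, iW⟩ := miss hWd hW' b2 c3
    exact ⟨Set.Icc 0 d \ {i}, Set.Icc 1 (δ-1),
      fun x hx => ⟨⟨Nat.zero_le _, hWd x hx⟩, fun e => iW (e ▸ hx)⟩,
      fun x hx => hx.1.2, fun x hx => ⟨pos b3 x hx, lst hBδ b1 x hx⟩,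
      fun x hx => hx.2.trans (Nat.sub_le _ _),
      Or.inl ⟨d, δ, i, hd, hδ, i0, id, Or.inl ⟨rfl, rfl, rfl, rfl⟩⟩⟩
  · have b1 : 0 ∈ B := by tauto
    have b2 : 0 ∉ W := by tauto
    have b3 : δ ∈ B := by tauto
    obtain ⟨i, i0, id, iB⟩ := miss hBδ hB' b1 b3
    exact ⟨Set.Icc 1 (d-1), Set.Icc 0 δ \ {i},
      fun x hx => ⟨pos b2 x hx, lst hWd c3 x hx⟩,
      fun x hx => hx.2.trans (Nat.sub_le _ _),
      fun x hx => ⟨⟨Nat.zero_le _, hBδ x hx⟩, fun e => iB (e ▸ hx)⟩,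
      fun x hx => hx.1.2,
      Or.inl ⟨δ, d, i, hδ, hd, i0, id, Or.inr (Or.inl ⟨rfl, rfl, rfl, rfl⟩)⟩⟩
end

section
/- Let d ≥ 3 and let G be a finite simple d-regular graph on n vertices equipped with an orientation of its edges such that every vertex has out-degree 0, 1, or d. Then the set S of vertices with out-degree exactly d is an independent set of G, and |S| ≥ (d−2)·n/(3d). -/
/-- The out-degree of `v` under the orientation `o` of (the edges of) `G`:
`o u v = true` means that the edge `{u, v}` is oriented `u → v`. -/
def outdegree {V : Type*} [Fintype V] [DecidableEq V] (G : SimpleGraph V) [DecidableRel G.Adj]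
    (o : V → V → Bool) (v : V) : ℕ :=
  ((G.neighborFinset v).filter (fun u => o v u = true)).card

/-- In a finite simple `d`-regular graph (`d ≥ 3`) on `n` vertices with an
orientation in which every vertex has out-degree `0`, `1`, or `d`, the set `S` of vertices of
out-degree exactly `d` is independent and satisfies `|S| ≥ (d-2)·n/(3d)`. -/
theorem stmt_18 {V : Type*} [Fintype V] [DecidableEq V]
    (G : SimpleGraph V) [DecidableRel G.Adj]
    (d : ℕ) (hd : 3 ≤ d) (hreg : ∀ v : V, G.degree v = d)
    (o : V → V → Bool)
    (ho : ∀ ⦃u v : V⦄, G.Adj u v → o u v = !o v u)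
    (hout : ∀ v : V, outdegree G o v = 0 ∨ outdegree G o v = 1 ∨ outdegree G o v = d) :
    (∀ u v : V, outdegree G o u = d → outdegree G o v = d → ¬ G.Adj u v) ∧
    ((d : ℝ) - 2) * (Fintype.card V) / (3 * d) ≤
      ({v : V | outdegree G o v = d}.ncard : ℝ) := by
  have key : 2 * ∑ v, outdegree G o v = Fintype.card V * d := by
    have h1 : ∀ v, outdegree G o v = ∑ u, if G.Adj v u ∧ o v u = true then 1 else 0 := by
      intro v
      unfold outdegree
      rw [Finset.card_eq_sum_ones, ← Finset.sum_filter]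
      congr 1
      ext u
      simp
    have h2 : ∑ v, outdegree G o v = ∑ v, ∑ u, if G.Adj v u ∧ o u v = true then 1 else 0 := by
      rw [Finset.sum_congr rfl (fun v _ => h1 v), Finset.sum_comm]
      simp only [G.adj_comm]
    have h3 : ∀ v, (∑ u, if G.Adj v u ∧ o v u = true then 1 else 0)
        + (∑ u, if G.Adj v u ∧ o u v = true then 1 else 0) = d := by
      intro v
      rw [← Finset.sum_add_distrib, ← hreg v, ← G.card_neighborFinset_eq_degree,
        Finset.card_eq_sum_ones, SimpleGraph.neighborFinset_eq_filter, Finset.sum_filter]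
      refine Finset.sum_congr rfl fun u _ => ?_
      by_cases h : G.Adj v u
      · have := ho h
        cases h5 : o u v <;> simp_all
      · simp [h]
    rw [two_mul]
    nth_rewrite 2 [h2]
    rw [Finset.sum_congr rfl (fun v _ => h1 v), ← Finset.sum_add_distrib,
      Finset.sum_congr rfl (fun v _ => h3 v)]
    simp
  have full : ∀ u v, outdegree G o u = d → G.Adj u v → o u v = true := by
    intro u v h huv
    unfold outdegree at h
    rw [← hreg u, ← G.card_neighborFinset_eq_degree, Finset.card_filter_eq_iff] at h
    exact h v (by simpa using huv)
  refine ⟨fun u v hu hv h => ?_, ?_⟩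
  · have a := full u v hu h
    have b := full v u hv h.symm
    have c := ho h
    simp [a, b] at c
  · have hs : {v : V | outdegree G o v = d}.ncard
        = ∑ v, if outdegree G o v = d then 1 else 0 := by
      rw [← Finset.sum_filter, ← Finset.card_eq_sum_ones, ← Set.ncard_coe_finset]
      simp
    have hle : ∑ v, outdegree G o v ≤
        ∑ v, ((d - 1) * (if outdegree G o v = d then 1 else 0) + 1) := by
      refine Finset.sum_le_sum fun v _ => ?_
      split_ifs with h
      · omega
      · have := hout v
        omega
    rw [Finset.sum_add_distrib, ← Finset.mul_sum, ← hs] at hle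
    generalize {v : V | outdegree G o v = d}.ncard = s at hle
    simp only [Finset.sum_const, Finset.card_univ, smul_eq_mul, mul_one] at hle
    generalize Fintype.card V = n at *
    have h4 : n * d ≤ 2 * ((d - 1) * s + n) := by omega
    obtain ⟨e, rfl⟩ : ∃ e, d = e + 1 := ⟨d - 1, by omega⟩
    simp only [Nat.add_sub_cancel] at h4
    have h5 : (n : ℝ) * (e + 1) ≤ 2 * (e * s + n) := by exact_mod_cast h4
    rw [div_le_iff₀ (by positivity)]
    push_cast
    have : (0 : ℝ) ≤ e * s := by positivity
    have : (0 : ℝ) ≤ s := by positivity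
    linarith
end

section
/- Let d ≥ 2 and r ≥ 0 be integers with 2r < d, and let G be a finite simple d-regular graph on n vertices (so with m = dn/2 edges) equipped with an orientation of its edges such that every vertex has out-degree at most r or in-degree at most r. Let S be the set of vertices with out-degree at most r. Then the number of edges of G with exactly one endpoint in S is at least (d−2r)·max(|S|, n−|S|); in particular, it is at least (1 − 2r/d)·m. -/
/-- The in-degree of `v` under the orientation `o` of (the edges of) `G`. -/
def indegree {V : Type*} [Fintype V] [DecidableEq V] (G : SimpleGraph V) [DecidableRel G.Adj]
    (o : V → V → Bool) (v : V) : ℕ :=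
  ((G.neighborFinset v).filter (fun u => o u v = true)).card

theorem aux_cut {V : Type*} [Fintype V] [DecidableEq V]
    (G : SimpleGraph V) [DecidableRel G.Adj]
    (d r : ℕ) (hreg : ∀ v : V, G.degree v = d)
    (o : V → V → Bool)
    (ho : ∀ ⦃u v : V⦄, G.Adj u v → o u v = !o v u) (S : Finset V)
    (hS : ∀ v ∈ S, outdegree G o v ≤ r) :
    d * S.card ≤ 2 * r * S.card +
      ∑ v ∈ S, ∑ u ∈ Sᶜ, (if G.Adj v u then 1 else 0) := by
  have h1 : ∀ v ∈ S, d = (∑ u ∈ S, if G.Adj v u ∧ o v u = true then 1 else 0)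
      + (∑ u ∈ S, if G.Adj v u ∧ o u v = true then 1 else 0)
      + ∑ u ∈ Sᶜ, (if G.Adj v u then 1 else 0) := by
    intro v _
    have hv : d = ∑ u, if G.Adj v u then 1 else 0 := by
      rw [← hreg v, ← G.card_neighborFinset_eq_degree, Finset.sum_boole]
      simp [G.neighborFinset_eq_filter]
    rw [hv, ← Finset.sum_add_sum_compl S, ← Finset.sum_add_distrib]
    congr 1
    apply Finset.sum_congr rfl
    intro u _
    by_cases h : G.Adj v u
    · have := ho h
      cases h2 : o u v <;> simp_all
    · simp [h]
  have h2 : ∀ v ∈ S, (∑ u ∈ S, if G.Adj v u ∧ o v u = true then 1 else 0) ≤ r := by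
    intro v hv
    refine le_trans ?_ (hS v hv)
    rw [Finset.sum_boole, outdegree]
    apply Finset.card_le_card
    intro u
    simp
  have h3 : (∑ v ∈ S, ∑ u ∈ S, if G.Adj v u ∧ o u v = true then 1 else 0)
      = ∑ v ∈ S, ∑ u ∈ S, if G.Adj v u ∧ o v u = true then 1 else 0 := by
    rw [Finset.sum_comm]
    simp only [G.adj_comm]
  have h4 := Finset.sum_le_sum h2
  have h5 := Finset.sum_congr rfl h1
  simp only [Finset.sum_add_distrib, Finset.sum_const, smul_eq_mul] at h4 h5
  rw [h3] at h5
  nlinarith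

theorem aux_card {V : Type*} [Fintype V] [DecidableEq V]
    (G : SimpleGraph V) [DecidableRel G.Adj] (S : Finset V) :
    {e : Sym2 V | e ∈ G.edgeSet ∧ ∃ u v : V, e = s(u, v) ∧ u ∈ S ∧ ¬ v ∈ S}.ncard
      = ∑ v ∈ S, ∑ u ∈ Sᶜ, (if G.Adj v u then 1 else 0) := by
  rw [← Finset.sum_product', Finset.sum_boole, Nat.cast_id]
  rw [← Finset.card_image_of_injOn (f := fun p : V × V => s(p.1, p.2)), ← Set.ncard_coe_finset]
  · congr 1
    ext e
    simp only [Set.mem_setOf_eq, Finset.coe_image, Set.mem_image, Finset.mem_coe,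
      Finset.mem_filter, Finset.mem_product, Finset.mem_compl, Prod.exists]
    constructor
    · rintro ⟨he, u, v, rfl, hu, hv⟩
      exact ⟨u, v, ⟨⟨hu, hv⟩, he⟩, rfl⟩
    · rintro ⟨u, v, ⟨⟨hu, hv⟩, he⟩, rfl⟩
      exact ⟨he, u, v, rfl, hu, hv⟩
  · rintro ⟨a, b⟩ h ⟨a', b'⟩ h' hh
    simp only [Finset.mem_coe, Finset.mem_filter, Finset.mem_product, Finset.mem_compl] at h h'
    simp only [Sym2.eq_iff] at hh
    rcases hh with ⟨rfl, rfl⟩ | ⟨rfl, rfl⟩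
    · rfl
    · exact absurd h.1.1 h'.1.2

/-- In a finite simple `d`-regular graph on `n` vertices (with `m = dn/2`
edges) with an orientation in which every vertex has out-degree at most `r` or in-degree at
most `r` (where `2r < d`), the set `S` of vertices of out-degree at most `r` satisfies: the
number of edges with exactly one endpoint in `S` is at least `(d - 2r)·max(|S|, n - |S|)`,
and in particular at least `(1 - 2r/d)·m`. -/
theorem stmt_19 {V : Type*} [Fintype V] [DecidableEq V]
    (G : SimpleGraph V) [DecidableRel G.Adj]
    (d r : ℕ) (hd : 2 ≤ d) (hr : 2 * r < d) (hreg : ∀ v : V, G.degree v = d)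
    (o : V → V → Bool)
    (ho : ∀ ⦃u v : V⦄, G.Adj u v → o u v = !o v u)
    (hdeg : ∀ v : V, outdegree G o v ≤ r ∨ indegree G o v ≤ r) :
    (d - 2 * r) *
        max ({v : V | outdegree G o v ≤ r}.ncard)
          (Fintype.card V - {v : V | outdegree G o v ≤ r}.ncard) ≤
      {e : Sym2 V | e ∈ G.edgeSet ∧ ∃ u v : V, e = s(u, v) ∧
        outdegree G o u ≤ r ∧ ¬ outdegree G o v ≤ r}.ncard ∧
    (1 - 2 * (r : ℝ) / d) * (G.edgeFinset.card : ℝ) ≤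
      ({e : Sym2 V | e ∈ G.edgeSet ∧ ∃ u v : V, e = s(u, v) ∧
        outdegree G o u ≤ r ∧ ¬ outdegree G o v ≤ r}.ncard : ℝ) := by
  obtain ⟨S, hS⟩ : ∃ S : Finset V, ∀ v, v ∈ S ↔ outdegree G o v ≤ r :=
    ⟨Finset.univ.filter (fun v => outdegree G o v ≤ r), by simp⟩
  have hT : ∀ v ∈ Sᶜ, outdegree G (fun a b => o b a) v ≤ r := by
    intro v hv
    rw [Finset.mem_compl, hS] at hv
    exact (hdeg v).resolve_left hv
  have c1 := aux_cut G d r hreg o ho S (fun v hv => (hS v).1 hv)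
  have c2 := aux_cut G d r hreg (fun a b => o b a) (fun u v h => ho h.symm) Sᶜ hT
  have c3 := aux_card G S
  rw [compl_compl, Finset.sum_comm] at c2
  simp only [G.adj_comm] at c1 c2 c3
  have c2' : d * Sᶜ.card ≤ 2 * r * Sᶜ.card +
      ∑ v ∈ S, ∑ u ∈ Sᶜ, (if G.Adj v u then 1 else 0) := by
    simpa only [G.adj_comm] using c2
  have hn : {v : V | outdegree G o v ≤ r}.ncard = S.card := by
    rw [← Set.ncard_coe_finset]
    congr 1
    ext v
    simp [hS]
  simp only [← hS] at hn ⊢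
  rw [hn, ← Finset.card_compl]
  rw [← c3] at c1 c2'
  generalize Set.ncard {e : Sym2 V | e ∈ G.edgeSet ∧ ∃ u v : V, e = s(u, v) ∧ u ∈ S ∧ ¬ v ∈ S}
    = C at *
  constructor
  · rcases max_cases S.card Sᶜ.card with ⟨h, -⟩ | ⟨h, -⟩ <;> rw [h, Nat.sub_mul] <;> omega
  · have hm : d * S.card + d * Sᶜ.card = 2 * G.edgeFinset.card := by
      rw [← G.sum_degrees_eq_twice_card_edges, ← mul_add, Finset.card_add_card_compl]
      simp [hreg, mul_comm]
    have hd0 : (0 : ℝ) < d := by exact_mod_cast (by omega : 0 < d)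
    have e1 : (d : ℝ) * S.card ≤ 2 * r * S.card + C := by exact_mod_cast c1
    have e2 : (d : ℝ) * Sᶜ.card ≤ 2 * r * Sᶜ.card + C := by exact_mod_cast c2'
    have e3 : (d : ℝ) * S.card + d * Sᶜ.card = 2 * G.edgeFinset.card := by exact_mod_cast hm
    have e4 : (G.edgeFinset.card : ℝ) = d * ((S.card + Sᶜ.card) / 2) := by linarith
    rw [e4, ← mul_assoc, sub_mul, div_mul_cancel₀ _ hd0.ne']
    nlinarith
end
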